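/- Let (Ω, P) be a probability space, T > 0, c > 0, q ∈ ℝ, r̄ ≥ 0, δ, δ_r ∈ (0,1). Let v, w, d, r : Ω × [0,T] → ℝ be such that for every ω, v(ω,·) is differentiable on [0,T], w(ω,t) ≥ 0, r(ω,t) ≥ 0, and v'(ω,t) ≤ -c·v(ω,t) + w(ω,t)·(d(ω,t) - q) + r(ω,t) on [0,T]. Suppose the events E = {ω : ∀ t, d(ω,t) ≤ q} and F = {ω : ∀ t, r(ω,t) ≤ r̄} are measurable and independent with P(E) ≥ 1 - δ and P(F) ≥ 1 - δ_r, and the event A = {ω : ∀ t ∈ [0,T], v(ω,t) ≤ v(ω,0)·exp(-c·t) + (r̄/c)·(1 - exp(-c·t))} is measurable. Then P(A) ≥ (1-δ)·(1-δ_r). -/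

import Mathlib

/-!
On `E ∩ F` the uncertainty term `w (d - q)` is nonpositive and the violation is at most `r̄`, so
each trajectory satisfies `v' ≤ -c v + r̄` on `[0, T]`. Grönwall's inequality with rate `-c` and
forcing `r̄` (`decay_of_deriv_le`) then gives the decay bound, so `E ∩ F` lies in the decay event.
By independence `P (E ∩ F) = P E * P F ≥ (1 - δ) (1 - δ_r)`.
-/

open MeasureTheory

/-- Grönwall's inequality with a negative rate, for a function differentiable within `[0, T]`
with no continuity or integrability assumed of the derivative. -/
lemma decay_of_deriv_le {f : ℝ → ℝ} {T c ρ : ℝ} (hc : 0 < c)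
    (hf : ∀ t ∈ Set.Icc (0 : ℝ) T, ∃ f' : ℝ,
      HasDerivWithinAt f f' (Set.Icc (0 : ℝ) T) t ∧ f' ≤ -c * f t + ρ) :
    ∀ t ∈ Set.Icc (0 : ℝ) T,
      f t ≤ f 0 * Real.exp (-c * t) + (ρ / c) * (1 - Real.exp (-c * t)) := by
  intro t ht
  choose! f' hf' hle using hf
  have key := le_gronwallBound_of_liminf_deriv_right_le (f := f) (f' := f') (δ := f 0) (K := -c)
    (ε := ρ) (a := 0) (b := T) (fun x hx => (hf' x hx).continuousWithinAt)
    (fun x hx s hs => ((hf' x ⟨hx.1, hx.2.le⟩).mono_of_mem_nhdsWithin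
      (Icc_mem_nhdsGE_of_mem hx)).liminf_right_slope_le hs)
    le_rfl (fun x hx => hle x ⟨hx.1, hx.2.le⟩) t ht
  rw [gronwallBound_of_K_ne_0 (neg_ne_zero.2 hc.ne'), sub_zero] at key
  refine key.trans_eq ?_
  rw [div_neg]
  ring

/-- Approximated CR-CLF proposition: if the robustified Lyapunov decrease condition is
violated by `r(ω,t) ≥ 0`, where the uncertainty event `E = {d ≤ q}` and the violation
event `F = {r ≤ r̄}` are independent with probabilities at least `1 - δ` and `1 - δ_r`,
then the relaxed decay bound holds with probability at least `(1-δ)(1-δ_r)`. -/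
theorem stmt11 (Ω : Type*) [MeasurableSpace Ω] (P : Measure Ω) [IsProbabilityMeasure P]
    (T c q rbar δ δr : ℝ) (hT : 0 < T) (hc : 0 < c) (hrbar : 0 ≤ rbar)
    (hδ : δ ∈ Set.Ioo (0 : ℝ) 1) (hδr : δr ∈ Set.Ioo (0 : ℝ) 1)
    (v w d r : Ω → ℝ → ℝ)
    (hw : ∀ ω t, 0 ≤ w ω t) (hr : ∀ ω t, 0 ≤ r ω t)
    (hderiv : ∀ ω, ∀ t ∈ Set.Icc (0 : ℝ) T, ∃ v' : ℝ,
      HasDerivWithinAt (v ω) v' (Set.Icc (0 : ℝ) T) t ∧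
      v' ≤ -c * v ω t + w ω t * (d ω t - q) + r ω t)
    (hEmeas : MeasurableSet {ω | ∀ t ∈ Set.Icc (0 : ℝ) T, d ω t ≤ q})
    (hFmeas : MeasurableSet {ω | ∀ t ∈ Set.Icc (0 : ℝ) T, r ω t ≤ rbar})
    (hindep : ProbabilityTheory.IndepSet
      {ω | ∀ t ∈ Set.Icc (0 : ℝ) T, d ω t ≤ q}
      {ω | ∀ t ∈ Set.Icc (0 : ℝ) T, r ω t ≤ rbar} P)
    (hE : ENNReal.ofReal (1 - δ) ≤ P {ω | ∀ t ∈ Set.Icc (0 : ℝ) T, d ω t ≤ q})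
    (hF : ENNReal.ofReal (1 - δr) ≤ P {ω | ∀ t ∈ Set.Icc (0 : ℝ) T, r ω t ≤ rbar})
    (hAmeas : MeasurableSet {ω | ∀ t ∈ Set.Icc (0 : ℝ) T,
      v ω t ≤ v ω 0 * Real.exp (-c * t) + (rbar / c) * (1 - Real.exp (-c * t))}) :
    ENNReal.ofReal ((1 - δ) * (1 - δr)) ≤
      P {ω | ∀ t ∈ Set.Icc (0 : ℝ) T,
        v ω t ≤ v ω 0 * Real.exp (-c * t) + (rbar / c) * (1 - Real.exp (-c * t))} := by
  calc
    ENNReal.ofReal ((1 - δ) * (1 - δr))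
        = ENNReal.ofReal (1 - δ) * ENNReal.ofReal (1 - δr) :=
          ENNReal.ofReal_mul (sub_nonneg.2 hδ.2.le)
    _ ≤ P {ω | ∀ t ∈ Set.Icc (0 : ℝ) T, d ω t ≤ q} *
          P {ω | ∀ t ∈ Set.Icc (0 : ℝ) T, r ω t ≤ rbar} := mul_le_mul' hE hF
    _ = P ({ω | ∀ t ∈ Set.Icc (0 : ℝ) T, d ω t ≤ q} ∩
          {ω | ∀ t ∈ Set.Icc (0 : ℝ) T, r ω t ≤ rbar}) := hindep.measure_inter_eq_mul.symm
    _ ≤ _ := by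
      refine measure_mono ?_
      rintro ω ⟨hωE, hωF⟩
      refine decay_of_deriv_le hc fun t ht => ?_
      obtain ⟨v', hv', hle⟩ := hderiv ω t ht
      refine ⟨v', hv', ?_⟩
      have h1 : w ω t * (d ω t - q) ≤ 0 :=
        mul_nonpos_of_nonneg_of_nonpos (hw ω t) (sub_nonpos.2 (hωE t ht))
      linarith [hωF t ht]
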